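/- arXiv:1701.01530 — 8 statements merged into one kernel-verified Lean document; each statement's English description precedes it below -/
import Mathlib

section
/- Let L, N ≥ 1 be integers, let p_1, …, p_L be nonnegative reals, and let f_1, …, f_N and β_{i,l} (for 1 ≤ i ≤ N, 1 ≤ l ≤ L) be strictly positive reals. Then ∑_{l=1}^{L} p_l · ln( (∑_{i=1}^{N} f_i) / (∑_{i=1}^{N} β_{i,l}) ) ≤ max_{1 ≤ i ≤ N} ∑_{l=1}^{L} p_l · ln( f_i / β_{i,l} ), where ln denotes the natural logarithm. -/
/-! The maximum over `i` dominates the average over `i` with weights `f i / ∑ j, f j`. For each fixed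
`l`, that average of `log (f i / β i l)` is at least `log ((∑ i, f i) / ∑ i, β i l)` by the log-sum
inequality (`sum_mul_log_div_le`). Multiplying by `p l ≥ 0` and summing over `l` gives the claim. -/

/-- The log-sum inequality, obtained from `log x ≤ x - 1` applied to
`x = ((∑ f) / (∑ b)) / (f i / b i)`. -/
theorem sum_mul_log_div_le {ι : Type*} {s : Finset ι} (hs : s.Nonempty) {f b : ι → ℝ}
    (hf : ∀ i, 0 < f i) (hb : ∀ i, 0 < b i) :
    (∑ i ∈ s, f i) * Real.log ((∑ i ∈ s, f i) / ∑ i ∈ s, b i)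
      ≤ ∑ i ∈ s, f i * Real.log (f i / b i) := by
  have hF : 0 < ∑ i ∈ s, f i := Finset.sum_pos (fun i _ => hf i) hs
  have hB : 0 < ∑ i ∈ s, b i := Finset.sum_pos (fun i _ => hb i) hs
  set F := ∑ i ∈ s, f i with hFdef
  set B := ∑ i ∈ s, b i with hBdef
  have key : ∀ i ∈ s, f i * Real.log (F / B) - f i * Real.log (f i / b i)
      ≤ F / B * b i - f i := by
    intro i _
    have hfi := hf i
    have hbi := hb i
    have h := Real.log_le_sub_one_of_pos (div_pos (div_pos hF hB) (div_pos hfi hbi))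
    rw [Real.log_div (div_pos hF hB).ne' (div_pos hfi hbi).ne'] at h
    calc f i * Real.log (F / B) - f i * Real.log (f i / b i)
        = f i * (Real.log (F / B) - Real.log (f i / b i)) := by ring
      _ ≤ f i * (F / B / (f i / b i) - 1) := mul_le_mul_of_nonneg_left h hfi.le
      _ = F / B * b i - f i := by field_simp
  have h := Finset.sum_le_sum key
  rw [Finset.sum_sub_distrib, Finset.sum_sub_distrib, ← Finset.sum_mul, ← Finset.mul_sum,
    ← hFdef, ← hBdef, div_mul_cancel₀ _ hB.ne'] at h
  linarith

/-- Lemma 5 of the paper (Burnashev's Lemma 7):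
`∑_l p_l ln((∑_i f_i)/(∑_i β_{i,l})) ≤ max_i ∑_l p_l ln(f_i/β_{i,l})`. -/
theorem sum_log_ratio_le_max
    (L N : ℕ) (hL : 0 < L) (hN : 0 < N)
    (p : Fin L → ℝ) (hp : ∀ l, 0 ≤ p l)
    (f : Fin N → ℝ) (hf : ∀ i, 0 < f i)
    (β : Fin N → Fin L → ℝ) (hβ : ∀ i l, 0 < β i l) :
    ∑ l, p l * Real.log ((∑ i, f i) / (∑ i, β i l))
      ≤ Finset.univ.sup' (Finset.univ_nonempty_iff.mpr ⟨⟨0, hN⟩⟩)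
          (fun i => ∑ l, p l * Real.log (f i / β i l)) := by
  have hne : (Finset.univ : Finset (Fin N)).Nonempty := ⟨⟨0, hN⟩, Finset.mem_univ _⟩
  have hF : 0 < ∑ i, f i := Finset.sum_pos (fun i _ => hf i) hne
  refine le_of_mul_le_mul_left ?_ hF
  calc (∑ i, f i) * ∑ l, p l * Real.log ((∑ i, f i) / (∑ i, β i l))
      = ∑ l, p l * ((∑ i, f i) * Real.log ((∑ i, f i) / (∑ i, β i l))) := by
        rw [Finset.mul_sum]
        exact Finset.sum_congr rfl fun l _ => by ring
    _ ≤ ∑ l, p l * ∑ i, f i * Real.log (f i / β i l) :=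
        Finset.sum_le_sum fun l _ => mul_le_mul_of_nonneg_left
          (sum_mul_log_div_le hne hf fun i => hβ i l) (hp l)
    _ = ∑ i, f i * ∑ l, p l * Real.log (f i / β i l) := by
        simp_rw [Finset.mul_sum]
        rw [Finset.sum_comm]
        exact Finset.sum_congr rfl fun i _ => Finset.sum_congr rfl fun l _ => by ring
    _ ≤ (∑ i, f i) * _ := by
        rw [Finset.sum_mul]
        exact Finset.sum_le_sum fun i _ => mul_le_mul_of_nonneg_left
          (Finset.le_sup' (fun i => ∑ l, p l * Real.log (f i / β i l)) (Finset.mem_univ i))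
          (hf i).le
end

section
/- For all real numbers x and a with 0 < x < 1 and 1 ≤ a < 1/x, one has (x ln x) / ((a x) ln(a x)) ≤ (1 − x) / (1 − a x), where ln denotes the natural logarithm. (Note that both x ln x and (ax) ln(ax) are negative, so the left-hand side is a ratio of two negative quantities and is positive.) -/
/-!
With `y = a * x`, so that `x ≤ y < 1`, the claim says that `t ↦ -(t * log t) / (1 - t)` is
at most as large at `x` as at `y`. This is the slope of the chord of `t ↦ t * log t` from `t` to
`1`, which is nondecreasing in `t` because `t * log t` is convex (`Real.convexOn_mul_log`).
-/

/-- The elementary inequality used in the paper's proof of Lemma 7: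
for `0 < x < 1` and `1 ≤ a < 1/x`, `(x ln x)/((ax) ln(ax)) ≤ (1 − x)/(1 − ax)`. -/
theorem xlogx_ratio_le (x a : ℝ) (hx0 : 0 < x) (hx1 : x < 1)
    (ha1 : 1 ≤ a) (hax : a < 1 / x) :
    (x * Real.log x) / ((a * x) * Real.log (a * x)) ≤ (1 - x) / (1 - a * x) := by
  have hy1 : a * x < 1 := (lt_div_iff₀ hx0).1 hax
  have hxy : x ≤ a * x := le_mul_of_one_le_left hx0.le ha1
  generalize a * x = y at hy1 hxy ⊢
  have hy0 : 0 < y := hx0.trans_le hxy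
  have hneg : y * Real.log y < 0 := mul_neg_of_pos_of_neg hy0 (Real.log_neg hy0 hy1)
  have h1x : 0 < 1 - x := by linarith
  have h1y : 0 < 1 - y := by linarith
  -- The graph of `t * log t` at `y`, a convex combination of `x` and `1`, lies below the chord
  -- from `x` to `1`, and the endpoint `1` contributes nothing.
  have key : y * Real.log y ≤ (1 - y) / (1 - x) * (x * Real.log x) := by
    have h := Real.convexOn_mul_log.2 (Set.mem_Ici.2 hx0.le) (Set.mem_Ici.2 zero_le_one)
      (show 0 ≤ (1 - y) / (1 - x) by positivity)
      (show 0 ≤ (y - x) / (1 - x) from div_nonneg (by linarith) h1x.le) (by field_simp; ring)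
    have hc : (1 - y) / (1 - x) * x + (y - x) / (1 - x) * 1 = y := by field_simp; ring
    simpa only [smul_eq_mul, hc, Real.log_one, mul_zero, add_zero] using h
  rw [div_mul_eq_mul_div, le_div_iff₀ h1x] at key
  rw [← neg_div_neg_eq, div_le_div_iff₀ (by linarith) h1y]
  linarith
end

section
/- The function g : (0,1) → ℝ defined by g(x) := ln(1 − x) − ln(−ln x) is concave on the open interval (0,1); that is, for all x, y ∈ (0,1) and t ∈ [0,1], g(t·x + (1−t)·y) ≥ t·g(x) + (1−t)·g(y). -/
/-!
The second derivative of `g x = log (1 - x) - log (-log x)` is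
`(log x + 1) / (x * log x) ^ 2 - 1 / (1 - x) ^ 2`. With `L = -log x`, it is nonpositive exactly
when `(1 - L) * (1 - x) ^ 2 ≤ (x * L) ^ 2`. The bound `2 * u / (u + 2) ≤ log (1 + u)` at
`u = 1 / x - 1` gives `L ≥ 2 * (1 - x) / (1 + x)`; the difference of the two sides increases
with `L`, and at that lower bound it equals `(1 - x) ^ 4 / (1 + x) ^ 2 ≥ 0`.
-/

lemma two_mul_div_le_neg_log {x : ℝ} (h0 : 0 < x) (h1 : x < 1) :
    2 * (1 - x) / (1 + x) ≤ -Real.log x := by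
  have hu : 0 ≤ x⁻¹ - 1 := sub_nonneg.2 ((one_le_inv₀ h0).2 h1.le)
  have h := Real.le_log_one_add_of_nonneg hu
  rw [show 1 + (x⁻¹ - 1) = x⁻¹ by ring, Real.log_inv] at h
  convert h using 1
  have : x⁻¹ - 1 + 2 ≠ 0 := by linarith
  rw [div_eq_div_iff (by linarith) this]
  field_simp
  ring

/-- The inequality equivalent to nonpositivity of the second derivative. -/
lemma log_add_one_mul_le {x : ℝ} (h0 : 0 < x) (h1 : x < 1) :
    (Real.log x + 1) * (1 - x) ^ 2 ≤ (x * Real.log x) ^ 2 := by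
  have hL := two_mul_div_le_neg_log h0 h1
  have hm : 0 ≤ 2 * (1 - x) / (1 + x) := div_nonneg (by linarith) (by linarith)
  have hsq : (2 * (1 - x) / (1 + x)) ^ 2 ≤ (-Real.log x) ^ 2 := pow_le_pow_left₀ hm hL 2
  have hkey : x ^ 2 * (2 * (1 - x) / (1 + x)) ^ 2
      + (2 * (1 - x) / (1 + x)) * (1 - x) ^ 2 - (1 - x) ^ 2
      = ((1 - x) ^ 2 / (1 + x)) ^ 2 := by
    have : 1 + x ≠ 0 := by linarith
    field_simp
    ring
  have e1 := mul_le_mul_of_nonneg_left hsq (sq_nonneg x)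
  have e2 := mul_le_mul_of_nonneg_right hL (sq_nonneg (1 - x))
  have e3 := sq_nonneg ((1 - x) ^ 2 / (1 + x))
  linarith

lemma concaveOn_log_one_sub_sub_log_neg_log :
    ConcaveOn ℝ (Set.Ioo (0 : ℝ) 1) fun x => Real.log (1 - x) - Real.log (-Real.log x) := by
  have hd : ∀ x ∈ Set.Ioo (0 : ℝ) 1,
      HasDerivAt (fun x => Real.log (1 - x) - Real.log (-Real.log x))
        (-(1 - x)⁻¹ - (x * Real.log x)⁻¹) x := by
    rintro x ⟨h0, h1⟩
    have hl := Real.log_neg h0 h1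
    have a := ((hasDerivAt_id x).const_sub 1).log (show 1 - x ≠ 0 by linarith)
    have b := ((Real.hasDerivAt_log h0.ne').neg).log (show -Real.log x ≠ 0 by linarith)
    refine (a.sub b).congr_deriv ?_
    have := hl.ne
    have : 1 - x ≠ 0 := by linarith
    simp only [id, Pi.neg_apply]
    field_simp
  have hd2 : ∀ x ∈ Set.Ioo (0 : ℝ) 1,
      HasDerivAt (fun x => -(1 - x)⁻¹ - (x * Real.log x)⁻¹)
        ((Real.log x + 1) / (x * Real.log x) ^ 2 - 1 / (1 - x) ^ 2) x := by
    rintro x ⟨h0, h1⟩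
    have hl := Real.log_neg h0 h1
    have a := (((hasDerivAt_id x).const_sub 1).fun_inv (show 1 - x ≠ 0 by linarith)).fun_neg
    have b := (Real.hasDerivAt_mul_log h0.ne').fun_inv (mul_ne_zero h0.ne' hl.ne)
    refine (a.fun_sub b).congr_deriv ?_
    simp only [id]
    ring
  refine concaveOn_of_hasDerivWithinAt2_nonpos (convex_Ioo 0 1)
    (fun x hx => (hd x hx).continuousAt.continuousWithinAt)
    (fun x hx => (hd x (interior_subset hx)).hasDerivWithinAt)
    (fun x hx => (hd2 x (interior_subset hx)).hasDerivWithinAt) fun x hx => ?_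
  obtain ⟨h0, h1⟩ := interior_subset hx
  have hl := Real.log_neg h0 h1
  have hp : 0 < (x * Real.log x) ^ 2 := by
    have := mul_ne_zero h0.ne' hl.ne
    positivity
  have hq : 0 < (1 - x) ^ 2 := pow_pos (by linarith) 2
  rw [sub_nonpos, div_le_div_iff₀ hp hq, one_mul]
  exact log_add_one_mul_le h0 h1


/-- Burnashev's concavity fact, used in the Jensen step of the paper's Lemma 7:
the function `x ↦ ln(1 − x) − ln(−ln x)` is concave on `(0,1)`. -/
theorem concave_log_one_sub_sub_log_neg_log :
    ∀ x ∈ Set.Ioo (0 : ℝ) 1, ∀ y ∈ Set.Ioo (0 : ℝ) 1, ∀ t ∈ Set.Icc (0 : ℝ) 1,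
      t * (Real.log (1 - x) - Real.log (-Real.log x))
          + (1 - t) * (Real.log (1 - y) - Real.log (-Real.log y))
        ≤ Real.log (1 - (t * x + (1 - t) * y))
            - Real.log (-Real.log (t * x + (1 - t) * y)) := by
  intro x hx y hy t ht
  exact concaveOn_log_one_sub_sub_log_neg_log.2 hx hy ht.1 (sub_nonneg.2 ht.2) (by ring)
end

section
/- Let Y be a nonempty finite set, let P and Q be probability mass functions on Y with P(y) > 0 and Q(y) > 0 for all y ∈ Y, and let η ∈ (0,1). Define p(y) := η·P(y) + (1−η)·Q(y) and f(y) := η·P(y)/p(y) for each y ∈ Y (so 0 < f(y) < 1). Then ∑_{y ∈ Y} p(y) · ln( (Q(y)·ln η) / (p(y)·ln f(y)) ) ≤ 0, where ln denotes the natural logarithm (note ln η < 0 and ln f(y) < 0, so the argument of the outer logarithm is positive). -/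
/-!
The function `h x = log (1 - x) - log (-log x)` is concave on `(0, 1)`
(`concaveOn_log_one_sub_sub_log_neg_log`). Write `p = η P + (1 - η) Q` and `f = η P / p`. Then
`Q / p = (1 - f) / (1 - η)`, so the logarithm in the summand at `y` equals `h (f y) - h η`. As `p`
is a probability weight with mean `∑ p f = η`, Jensen's inequality gives `∑ p h(f) ≤ h η`.

Concavity of `h` amounts to `(1 + log x) (1 - x) ^ 2 ≤ (x log x) ^ 2`, which follows from the
Padé-type bound `2 u / (u + 2) ≤ log (1 + u)` at `1 + u = 1 / x`.
-/

/-- The inequality `h'' ≤ 0` for `h x = log (1 - x) - log (-log x)`, with denominators cleared. -/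
lemma one_add_log_mul_one_sub_sq_le {x : ℝ} (h0 : 0 < x) (h1 : x < 1) :
    (1 + Real.log x) * (1 - x) ^ 2 ≤ (x * Real.log x) ^ 2 := by
  have hu : 0 ≤ (1 - x) / x := div_nonneg (by linarith) h0.le
  have key := Real.le_log_one_add_of_nonneg hu
  have e1 : 1 + (1 - x) / x = x⁻¹ := by field_simp; ring
  have e2 : 2 * ((1 - x) / x) / ((1 - x) / x + 2) = 2 * (1 - x) / (1 + x) := by
    have : (1 - x) / x + 2 = (1 + x) / x := by field_simp; ring
    rw [this]; field_simp
  rw [e1, e2, Real.log_inv] at key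
  set s := 2 * (1 - x) / (1 + x) with hs
  have hs0 : 0 ≤ s := div_nonneg (by linarith) (by linarith)
  -- The claim is monotone in `-log x ≥ 0`, so it suffices to check it at the lower bound `s`.
  have hmain : (1 - s) * (1 - x) ^ 2 ≤ (x * s) ^ 2 := by
    have : (x * s) ^ 2 - (1 - s) * (1 - x) ^ 2 = ((1 - x) ^ 2 / (1 + x)) ^ 2 := by
      rw [hs]; field_simp; ring
    nlinarith [sq_nonneg ((1 - x) ^ 2 / (1 + x))]
  have a1 : (1 + Real.log x) * (1 - x) ^ 2 ≤ (1 - s) * (1 - x) ^ 2 := by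
    gcongr; linarith
  have a2 : (x * s) ^ 2 ≤ (x * (-Real.log x)) ^ 2 := by gcongr
  calc _ ≤ _ := a1.trans (hmain.trans a2)
    _ = _ := by ring

/-- Inequality (eq103new) in the paper's proof of Lemma 7:
with `p(y) = η P(y) + (1−η) Q(y)` and `f(y) = η P(y)/p(y)`,
`∑_y p(y) ln((Q(y) ln η)/(p(y) ln f(y))) ≤ 0`. -/
theorem sum_log_ratio_nonpos
    {Y : Type*} [Fintype Y] [Nonempty Y]
    (P Q : Y → ℝ) (hP : ∀ y, 0 < P y) (hQ : ∀ y, 0 < Q y)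
    (hPs : ∑ y, P y = 1) (hQs : ∑ y, Q y = 1)
    (η : ℝ) (hη : η ∈ Set.Ioo (0 : ℝ) 1) :
    ∑ y, (η * P y + (1 - η) * Q y) *
        Real.log ((Q y * Real.log η) /
          ((η * P y + (1 - η) * Q y) *
            Real.log (η * P y / (η * P y + (1 - η) * Q y)))) ≤ 0 := by
  obtain ⟨h0, h1⟩ := hη
  have hη' : 0 < 1 - η := by linarith
  have hp : ∀ y, 0 < η * P y + (1 - η) * Q y := fun y =>
    add_pos (mul_pos h0 (hP y)) (mul_pos hη' (hQ y))
  have hf : ∀ y, η * P y / (η * P y + (1 - η) * Q y) ∈ Set.Ioo (0 : ℝ) 1 := fun y =>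
    ⟨div_pos (mul_pos h0 (hP y)) (hp y), by
      rw [div_lt_one (hp y)]
      linarith [mul_pos hη' (hQ y)]⟩
  have hps : ∑ y, (η * P y + (1 - η) * Q y) = 1 := by
    rw [Finset.sum_add_distrib, ← Finset.mul_sum, ← Finset.mul_sum, hPs, hQs]
    ring
  have hmean : ∑ y, (η * P y + (1 - η) * Q y) • (η * P y / (η * P y + (1 - η) * Q y)) = η := by
    simp_rw [smul_eq_mul, mul_div_cancel₀ _ (hp _).ne']
    rw [← Finset.mul_sum, hPs, mul_one]
  have J := concaveOn_log_one_sub_sub_log_neg_log.le_map_sum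
    (t := Finset.univ) (fun y _ => (hp y).le) hps (fun y _ => hf y)
  rw [hmean] at J
  have hterm : ∀ y, Real.log ((Q y * Real.log η) /
      ((η * P y + (1 - η) * Q y) * Real.log (η * P y / (η * P y + (1 - η) * Q y)))) =
      (Real.log (1 - η * P y / (η * P y + (1 - η) * Q y)) -
        Real.log (-Real.log (η * P y / (η * P y + (1 - η) * Q y)))) -
      (Real.log (1 - η) - Real.log (-Real.log η)) := by
    intro y
    have hlη := Real.log_neg h0 h1
    have hlf := Real.log_neg (hf y).1 (hf y).2
    have hQp : 1 - η * P y / (η * P y + (1 - η) * Q y) =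
        (1 - η) * Q y / (η * P y + (1 - η) * Q y) := by
      rw [eq_div_iff (hp y).ne', sub_mul, div_mul_cancel₀ _ (hp y).ne']
      ring
    rw [hQp, Real.log_div (mul_ne_zero (hQ y).ne' hlη.ne) (mul_ne_zero (hp y).ne' hlf.ne),
      Real.log_mul (hQ y).ne' hlη.ne, Real.log_mul (hp y).ne' hlf.ne,
      Real.log_div (mul_ne_zero hη'.ne' (hQ y).ne') (hp y).ne',
      Real.log_mul hη'.ne' (hQ y).ne', Real.log_neg_eq_log, Real.log_neg_eq_log]
    ring
  simp_rw [hterm, mul_sub _ (_ - _) (_ - _), Finset.sum_sub_distrib]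
  rw [← Finset.sum_mul, hps, one_mul]
  simpa only [smul_eq_mul, sub_nonpos] using J
end

section
/- For all real numbers p > 0, q > 0 and η ∈ [0,1], writing m := η·p + (1−η)·q, one has m · ln( m² / (p·q) ) ≤ max{ 0, η·p·ln(p/q) + (1−η)·q·ln(q/p) }, where ln denotes the natural logarithm. -/
/-- The pointwise inequality (eqn:removable2) in the paper:
for `p, q > 0` and `η ∈ [0,1]`, with `m = η p + (1−η) q`,
`m ln(m²/(pq)) ≤ max{0, η p ln(p/q) + (1−η) q ln(q/p)}`. -/
theorem mix_log_sq_le_max (p q η : ℝ) (hp : 0 < p) (hq : 0 < q)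
    (hη : η ∈ Set.Icc (0 : ℝ) 1) :
    (η * p + (1 - η) * q) * Real.log ((η * p + (1 - η) * q) ^ 2 / (p * q))
      ≤ max 0 (η * p * Real.log (p / q) + (1 - η) * q * Real.log (q / p)) := by
  -- The second argument of the maximum is always an upper bound: after expanding the logarithms,
  -- it exceeds the left side by twice the Jensen gap of `x ↦ x * log x`.
  refine le_max_of_le_right ?_
  obtain ⟨h0, h1⟩ := hη
  have hJensen := Real.convexOn_mul_log.2 (Set.mem_Ici.2 hp.le) (Set.mem_Ici.2 hq.le) h0
    (sub_nonneg.2 h1) (add_sub_cancel η 1)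
  simp only [smul_eq_mul] at hJensen
  have hm : 0 < η * p + (1 - η) * q := by
    rcases h0.eq_or_lt with rfl | h
    · simpa using hq
    · have := mul_pos h hp
      have := mul_nonneg (sub_nonneg.2 h1) hq.le
      linarith
  rw [Real.log_div (pow_ne_zero 2 hm.ne') (mul_pos hp hq).ne', Real.log_pow,
    Real.log_mul hp.ne' hq.ne', Real.log_div hp.ne' hq.ne', Real.log_div hq.ne' hp.ne']
  push_cast
  linarith
end

section
/- Let Y be a nonempty finite set, let P and Q be probability mass functions on Y with P(y) > 0 and Q(y) > 0 for all y ∈ Y, and let η ∈ [0,1]. Define p(y) := η·P(y) + (1−η)·Q(y). Then ∑_{y ∈ Y} p(y) · ln( p(y)² / (P(y)·Q(y)) ) ≤ max{ 0, η·D(P‖Q) + (1−η)·D(Q‖P) } ≤ max{ D(P‖Q), D(Q‖P) }. -/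
/-!
For fixed positive `a = P y`, `b = Q y` the function `t ↦ t log (t² / (a b)) = 2 t log t - t log (a b)`
is convex, and takes the values `a log (a / b)` at `t = a` and `b log (b / a)` at `t = b`. Convexity
at `t = η a + (1 - η) b`, summed over `y`, bounds the left-hand sum by
`η D(P‖Q) + (1 - η) D(Q‖P)` directly. The second inequality holds because a convex combination is
at most the maximum and `D(P‖Q) ≥ 0` (Gibbs).
-/

/-- Convexity of `t ↦ t log (t² / (a b))` on the segment between `a` and `b`. -/
lemma mix_mul_log_sq_le {a b η : ℝ} (ha : 0 < a) (hb : 0 < b) (hη : η ∈ Set.Icc (0 : ℝ) 1) :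
    (η * a + (1 - η) * b) * Real.log ((η * a + (1 - η) * b) ^ 2 / (a * b)) ≤
      η * (a * Real.log (a / b)) + (1 - η) * (b * Real.log (b / a)) := by
  obtain ⟨h0, h1⟩ := hη
  have hp : 0 < η * a + (1 - η) * b := by
    have := (convex_Ioi (0 : ℝ)) ha hb h0 (sub_nonneg.2 h1) (by ring)
    simpa using this
  have hc := Real.convexOn_mul_log.2 ha.le hb.le h0 (sub_nonneg.2 h1) (by ring)
  simp only [smul_eq_mul] at hc
  rw [Real.log_div (by positivity) (by positivity), Real.log_pow, Real.log_mul ha.ne' hb.ne',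
    Real.log_div ha.ne' hb.ne', Real.log_div hb.ne' ha.ne']
  push_cast
  linarith

/-- Gibbs' inequality: the Kullback–Leibler divergence is nonnegative. -/
lemma sum_mul_log_div_nonneg {Y : Type*} [Fintype Y] (P Q : Y → ℝ) (hP : ∀ y, 0 < P y)
    (hQ : ∀ y, 0 < Q y) (hPs : ∑ y, P y = 1) (hQs : ∑ y, Q y = 1) :
    0 ≤ ∑ y, P y * Real.log (P y / Q y) := by
  have h : ∑ y, (P y - Q y) ≤ ∑ y, P y * Real.log (P y / Q y) := by
    refine Finset.sum_le_sum fun y _ => ?_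
    have h1 := mul_le_mul_of_nonneg_left
      (Real.one_sub_inv_le_log_of_pos (div_pos (hP y) (hQ y))) (hP y).le
    have h2 : P y * (1 - (P y / Q y)⁻¹) = P y - Q y := by
      have := (hP y).ne'
      field_simp
    linarith
  rwa [Finset.sum_sub_distrib, hPs, hQs, sub_self] at h


/-- Inequality (eq111new) in the paper's proof of Lemma 7: with
`p(y) = η P(y) + (1−η) Q(y)`,
`∑_y p(y) ln(p(y)²/(P(y)Q(y))) ≤ max{0, η D(P‖Q) + (1−η) D(Q‖P)} ≤ max{D(P‖Q), D(Q‖P)}`. -/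
theorem sum_mix_log_sq_le_max_klDiv
    {Y : Type*} [Fintype Y] [Nonempty Y]
    (P Q : Y → ℝ) (hP : ∀ y, 0 < P y) (hQ : ∀ y, 0 < Q y)
    (hPs : ∑ y, P y = 1) (hQs : ∑ y, Q y = 1)
    (η : ℝ) (hη : η ∈ Set.Icc (0 : ℝ) 1) :
    (∑ y, (η * P y + (1 - η) * Q y) *
          Real.log ((η * P y + (1 - η) * Q y) ^ 2 / (P y * Q y))
        ≤ max 0 (η * ∑ y, P y * Real.log (P y / Q y)
            + (1 - η) * ∑ y, Q y * Real.log (Q y / P y))) ∧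
    (max 0 (η * ∑ y, P y * Real.log (P y / Q y)
          + (1 - η) * ∑ y, Q y * Real.log (Q y / P y))
        ≤ max (∑ y, P y * Real.log (P y / Q y))
            (∑ y, Q y * Real.log (Q y / P y))) := by
  constructor
  · refine le_trans ?_ (le_max_right _ _)
    rw [Finset.mul_sum, Finset.mul_sum, ← Finset.sum_add_distrib]
    exact Finset.sum_le_sum fun y _ => mix_mul_log_sq_le (hP y) (hQ y) hη
  · refine max_le (le_max_of_le_left (sum_mul_log_div_nonneg P Q hP hQ hPs hQs)) ?_
    exact Convex.combo_le_max _ _ hη.1 (sub_nonneg.2 hη.2) (by ring)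
end

section
/- Let Y be a nonempty finite set, let P and Q be probability mass functions on Y with P(y) > 0 and Q(y) > 0 for all y ∈ Y, and let η ∈ (0,1). Define p(y) := η·P(y) + (1−η)·Q(y) and f(y) := η·P(y)/p(y) (so 0 < f(y) < 1 for all y). Then ∑_{y ∈ Y} p(y) · ln( (η·ln η) / (f(y)·ln f(y)) ) ≤ max{ 0, η·D(P‖Q) + (1−η)·D(Q‖P) }, where ln denotes the natural logarithm (note η ln η < 0 and f(y) ln f(y) < 0, so the argument of the outer logarithm is positive). -/
/-!
Write `f y = η P(y) / p(y)`; then `p` is a probability vector and `∑ p f = η`. Since `η P = p f` and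
`(1 - η) Q = p (1 - f)`, the symmetrised divergence on the right equals
`∑ p (2 f - 1) (L(f) - L(η))`, where `L(x) = ln x - ln (1 - x)`. Hence the inequality (even without
the maximum with `0`) is Jensen's inequality for
`φ(x) = ln x + ln (-ln x) + (2 x - 1) L(x)` on `(0, 1)`.

Convexity of `φ` follows from `x² φ''(x) = 1 / (1 - x)² - 1 + 1 / m - 1 / m²` with `m = -ln x > 0`.
If `m ≤ 1`, this is nonnegative because `1 - x ≤ m` and `1 ≤ 1 / m`; if `m ≥ 1`, because
`1 - x ≤ 1` and `1 / m² ≤ 1 / m`.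
-/

/-- The function whose Jensen inequality is the entropy bound: `ln (-x ln x)`, split as a sum, plus
`(2 x - 1)` times the logit of `x`. -/
noncomputable def entropyLogit (x : ℝ) : ℝ :=
  Real.log x + Real.log (-Real.log x) + (2 * x - 1) * (Real.log x - Real.log (1 - x))

lemma hasDerivAt_entropyLogit {x : ℝ} (h0 : 0 < x) (h1 : x < 1) :
    HasDerivAt entropyLogit
      ((x * Real.log x)⁻¹ + 2 * (Real.log x - Real.log (1 - x)) + (1 - x)⁻¹) x := by
  have hl : Real.log x < 0 := Real.log_neg h0 h1
  have h1x : 1 - x ≠ 0 := by linarith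
  have d1 := Real.hasDerivAt_log h0.ne'
  have d2 := d1.neg.log (by simpa using hl.ne)
  have d3 := ((hasDerivAt_id x).const_sub 1).log h1x
  have d4 := ((hasDerivAt_id x).const_mul 2).sub_const 1
  refine ((d1.add d2).add (d4.mul (d1.sub d3))).congr_deriv ?_
  have := h0.ne'
  have := hl.ne
  simp only [id, Pi.neg_apply, Pi.sub_apply]
  field_simp
  ring

lemma hasDerivAt_deriv_entropyLogit {x : ℝ} (h0 : 0 < x) (h1 : x < 1) :
    HasDerivAt (fun x : ℝ =>
        (x * Real.log x)⁻¹ + 2 * (Real.log x - Real.log (1 - x)) + (1 - x)⁻¹)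
      ((x ^ 2)⁻¹ * (((1 - x) ^ 2)⁻¹ - 1 - (Real.log x)⁻¹ - (Real.log x ^ 2)⁻¹)) x := by
  have hl : Real.log x < 0 := Real.log_neg h0 h1
  have h1x : 1 - x ≠ 0 := by linarith
  have hx := h0.ne'
  have hl' := hl.ne
  have d1 := Real.hasDerivAt_log h0.ne'
  have d2 := ((hasDerivAt_id x).mul d1).inv (mul_ne_zero hx hl')
  have d0 := (hasDerivAt_id x).const_sub 1
  have d3 := d0.log h1x
  have d4 := d0.inv h1x
  refine ((d2.add ((d1.sub d3).const_mul 2)).add d4).congr_deriv ?_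
  simp only [id, Pi.mul_apply]
  field_simp
  ring

lemma second_deriv_entropyLogit_nonneg {x : ℝ} (h0 : 0 < x) (h1 : x < 1) :
    0 ≤ (x ^ 2)⁻¹ * (((1 - x) ^ 2)⁻¹ - 1 - (Real.log x)⁻¹ - (Real.log x ^ 2)⁻¹) := by
  refine mul_nonneg (by positivity) ?_
  obtain ⟨m, hm⟩ : ∃ m, m = -Real.log x := ⟨_, rfl⟩
  have hlm : Real.log x = -m := by linarith
  have hm0 : 0 < m := by linarith [Real.log_neg h0 h1]
  have hxm : 1 - x ≤ m := by linarith [Real.log_le_sub_one_of_pos h0]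
  have h1x : 0 < 1 - x := by linarith
  rw [hlm, inv_neg, neg_sq]
  rcases le_total m 1 with h | h
  · have e1 : (m ^ 2)⁻¹ ≤ ((1 - x) ^ 2)⁻¹ := by gcongr
    have e2 : 1 ≤ m⁻¹ := (one_le_inv₀ hm0).2 h
    linarith
  · have e1 : 1 ≤ ((1 - x) ^ 2)⁻¹ := (one_le_inv₀ (by positivity)).2 (by nlinarith)
    have e2 : (m ^ 2)⁻¹ ≤ m⁻¹ := inv_anti₀ hm0 (by nlinarith)
    linarith

lemma convexOn_entropyLogit : ConvexOn ℝ (Set.Ioo 0 1) entropyLogit := by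
  refine convexOn_of_hasDerivWithinAt2_nonneg (convex_Ioo 0 1)
    (f' := fun x => (x * Real.log x)⁻¹ + 2 * (Real.log x - Real.log (1 - x)) + (1 - x)⁻¹)
    (f'' := fun x =>
      (x ^ 2)⁻¹ * (((1 - x) ^ 2)⁻¹ - 1 - (Real.log x)⁻¹ - (Real.log x ^ 2)⁻¹))
    (fun x hx => (hasDerivAt_entropyLogit hx.1 hx.2).continuousAt.continuousWithinAt)
    (fun x hx => ?_) (fun x hx => ?_) (fun x hx => ?_) <;> rw [interior_Ioo] at hx
  · exact (hasDerivAt_entropyLogit hx.1 hx.2).hasDerivWithinAt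
  · exact (hasDerivAt_deriv_entropyLogit hx.1 hx.2).hasDerivWithinAt
  · exact second_deriv_entropyLogit_nonneg hx.1 hx.2

/-- The logarithm of the entropy ratio in terms of `entropyLogit`, for two points of `(0, 1)`. -/
lemma log_entropy_ratio {a b : ℝ} (ha : a ∈ Set.Ioo (0 : ℝ) 1) (hb : b ∈ Set.Ioo (0 : ℝ) 1) :
    Real.log ((a * Real.log a) / (b * Real.log b)) =
      entropyLogit a - entropyLogit b
        - (2 * a - 1) * (Real.log a - Real.log (1 - a))
        + (2 * b - 1) * (Real.log b - Real.log (1 - b)) := by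
  have hla := Real.log_neg ha.1 ha.2
  have hlb := Real.log_neg hb.1 hb.2
  rw [Real.log_div (mul_ne_zero ha.1.ne' hla.ne) (mul_ne_zero hb.1.ne' hlb.ne),
    Real.log_mul ha.1.ne' hla.ne, Real.log_mul hb.1.ne' hlb.ne]
  simp only [entropyLogit, Real.log_neg_eq_log]
  ring

/-- The core quantitative content of the paper's Lemma 7: with
`p(y) = η P(y) + (1−η) Q(y)` and `f(y) = η P(y)/p(y)`,
`∑_y p(y) ln((η ln η)/(f(y) ln f(y))) ≤ max{0, η D(P‖Q) + (1−η) D(Q‖P)}`. -/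
theorem sum_log_entropy_drop_le_max_klDiv
    {Y : Type*} [Fintype Y] [Nonempty Y]
    (P Q : Y → ℝ) (hP : ∀ y, 0 < P y) (hQ : ∀ y, 0 < Q y)
    (hPs : ∑ y, P y = 1) (hQs : ∑ y, Q y = 1)
    (η : ℝ) (hη : η ∈ Set.Ioo (0 : ℝ) 1) :
    ∑ y, (η * P y + (1 - η) * Q y) *
        Real.log ((η * Real.log η) /
          ((η * P y / (η * P y + (1 - η) * Q y)) *
            Real.log (η * P y / (η * P y + (1 - η) * Q y))))
      ≤ max 0 (η * ∑ y, P y * Real.log (P y / Q y)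
          + (1 - η) * ∑ y, Q y * Real.log (Q y / P y)) := by
  obtain ⟨h0, h1⟩ := hη
  have h1' : 0 < 1 - η := by linarith
  refine le_max_of_le_right ?_
  set p : Y → ℝ := fun y => η * P y + (1 - η) * Q y with hp
  set f : Y → ℝ := fun y => η * P y / p y with hf
  have hp0 : ∀ y, 0 < p y := fun y =>
    add_pos (mul_pos h0 (hP y)) (mul_pos h1' (hQ y))
  have hpf : ∀ y, p y * f y = η * P y := fun y => mul_div_cancel₀ _ (hp0 y).ne'
  have hpf' : ∀ y, p y * (1 - f y) = (1 - η) * Q y := fun y => by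
    have := hpf y
    have e : p y = η * P y + (1 - η) * Q y := rfl
    linarith
  have hfm : ∀ y, f y ∈ Set.Ioo (0 : ℝ) 1 := fun y => by
    refine ⟨div_pos (mul_pos h0 (hP y)) (hp0 y), (div_lt_one (hp0 y)).2 ?_⟩
    exact lt_add_of_pos_right _ (mul_pos h1' (hQ y))
  have hps : ∑ y, p y = 1 := by
    simp only [hp, Finset.sum_add_distrib, ← Finset.mul_sum, hPs, hQs]; ring
  have hpfs : ∑ y, p y * f y = η := by
    simp only [hpf, ← Finset.mul_sum, hPs, mul_one]
  have hJ : entropyLogit η ≤ ∑ y, p y * entropyLogit (f y) := by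
    have := convexOn_entropyLogit.map_sum_le (t := Finset.univ) (w := p) (p := f)
      (fun y _ => (hp0 y).le) hps (fun y _ => hfm y)
    simpa only [smul_eq_mul, hpfs] using this
  -- The divergence integrand, expressed through `p`, `f` and the logit.
  have hD : η * ∑ y, P y * Real.log (P y / Q y) + (1 - η) * ∑ y, Q y * Real.log (Q y / P y)
      = ∑ y, p y * ((2 * f y - 1) *
          (Real.log (f y) - Real.log (1 - f y) - (Real.log η - Real.log (1 - η)))) := by
    rw [Finset.mul_sum, Finset.mul_sum, ← Finset.sum_add_distrib]
    refine Finset.sum_congr rfl fun y _ => ?_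
    have l1 := congrArg Real.log (hpf y)
    have l2 := congrArg Real.log (hpf' y)
    rw [Real.log_mul (hp0 y).ne' (hfm y).1.ne', Real.log_mul h0.ne' (hP y).ne'] at l1
    rw [Real.log_mul (hp0 y).ne' (sub_pos.2 (hfm y).2).ne',
      Real.log_mul h1'.ne' (hQ y).ne'] at l2
    have e : Real.log (f y) - Real.log (1 - f y) - (Real.log η - Real.log (1 - η))
        = Real.log (P y) - Real.log (Q y) := by linarith
    rw [e, Real.log_div (hP y).ne' (hQ y).ne', Real.log_div (hQ y).ne' (hP y).ne']
    linear_combination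
      (-(Real.log (P y) - Real.log (Q y))) * (hpf y - hpf' y)
  have hL : ∑ y, p y * Real.log ((η * Real.log η) / (f y * Real.log (f y)))
      = entropyLogit η * ∑ y, p y - ∑ y, p y * entropyLogit (f y)
        + ∑ y, p y * ((2 * f y - 1) *
          (Real.log (f y) - Real.log (1 - f y) - (Real.log η - Real.log (1 - η))))
        + 2 * (Real.log η - Real.log (1 - η)) * (∑ y, p y * f y - η * ∑ y, p y) := by
    simp only [mul_sub, Finset.mul_sum, ← Finset.sum_sub_distrib, ← Finset.sum_add_distrib]
    refine Finset.sum_congr rfl fun y _ => ?_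
    rw [log_entropy_ratio ⟨h0, h1⟩ (hfm y)]
    ring
  rw [hD]
  change ∑ y, p y * Real.log ((η * Real.log η) / (f y * Real.log (f y))) ≤ _
  rw [hL, hps, hpfs]
  linarith
end

section
/- For all real numbers p > 0, q > 0 and η ∈ (0,1), writing χ := η·p / (η·p + (1−η)·q) (so χ ∈ (0,1)), one has (η·ln η) / (χ·ln χ) ≤ max{ p/q, q/p }, where ln denotes the natural logarithm (note η ln η < 0 and χ ln χ < 0, so the left-hand side is positive). -/
/-!
With `r = p / q`, the odds of `χ` are `r` times the odds of `η`, i.e. `1/η = 1 + r (1/χ - 1)`.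
If `p ≤ q` then `χ ≤ η`, so `-log η ≤ -log χ`, while `η ≤ (q/p) χ` because the normalizer
`ηp + (1-η)q` is at most `q`. If `q ≤ p` then `η ≤ χ`, and Bernoulli's inequality
`1 + r (1/χ - 1) ≤ (1/χ)^r` gives `-log η ≤ r (-log χ)`. Multiplying the two bounds in each
case gives `-η log η ≤ max (p/q) (q/p) * (-χ log χ)`.
-/

/-- Bernoulli's inequality in logarithmic form: dividing the odds against an event by `r ≥ 1`
shrinks its surprisal by at most the factor `r`. -/
lemma neg_log_le_mul_neg_log {r η χ : ℝ} (hr : 1 ≤ r) (hη : 0 < η) (hχ : 0 < χ)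
    (h : η⁻¹ = 1 + r * (χ⁻¹ - 1)) : -Real.log η ≤ r * -Real.log χ := by
  have hχi : 0 < χ⁻¹ := inv_pos.2 hχ
  have hB := one_add_mul_self_le_rpow_one_add (s := χ⁻¹ - 1) (by linarith) hr
  rw [← h, add_sub_cancel] at hB
  have hL := Real.log_le_log (inv_pos.2 hη) hB
  rwa [Real.log_rpow hχi, Real.log_inv, Real.log_inv] at hL

/-- The core quantitative content of the paper's Lemma 8: for `p, q > 0` and
`η ∈ (0,1)`, with `χ = ηp/(ηp + (1−η)q)`,
`(η ln η)/(χ ln χ) ≤ max{p/q, q/p}`. -/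
theorem eta_log_ratio_le_max_likelihood_ratio (p q η : ℝ)
    (hp : 0 < p) (hq : 0 < q) (hη : η ∈ Set.Ioo (0 : ℝ) 1) :
    (η * Real.log η) /
        ((η * p / (η * p + (1 - η) * q)) *
          Real.log (η * p / (η * p + (1 - η) * q)))
      ≤ max (p / q) (q / p) := by
  obtain ⟨h0, h1⟩ := hη
  have h1' : 0 < 1 - η := by linarith
  have hD : 0 < η * p + (1 - η) * q := by positivity
  have hodds : η⁻¹ = 1 + p / q * ((η * p / (η * p + (1 - η) * q))⁻¹ - 1) := by
    field_simp
    ring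
  have hχ0 : 0 < η * p / (η * p + (1 - η) * q) := by positivity
  have hχ1 : η * p / (η * p + (1 - η) * q) < 1 := by
    rw [div_lt_one hD]
    linarith [mul_pos h1' hq]
  have hlη := Real.log_neg h0 h1
  have hlχ := Real.log_neg hχ0 hχ1
  rw [div_le_iff_of_neg (mul_neg_of_pos_of_neg hχ0 hlχ)]
  rcases le_total q p with h | h
  · have hle : η ≤ η * p / (η * p + (1 - η) * q) := by
      rw [le_div_iff₀ hD]
      nlinarith [mul_nonneg (mul_pos h0 h1').le (sub_nonneg.2 h)]
    have hL := neg_log_le_mul_neg_log ((one_le_div hq).2 h) h0 hχ0 hodds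
    have hmul := mul_le_mul hle hL (by linarith) hχ0.le
    have hmax := mul_le_mul_of_nonpos_right (le_max_left (p / q) (q / p))
      (mul_neg_of_pos_of_neg hχ0 hlχ).le
    linarith
  · have hle : η * p / (η * p + (1 - η) * q) ≤ η := by
      rw [div_le_iff₀ hD]
      nlinarith [mul_nonneg (mul_pos h0 h1').le (sub_nonneg.2 h)]
    have hL := Real.log_le_log hχ0 hle
    have hη_le : η ≤ q / p * (η * p / (η * p + (1 - η) * q)) := by
      have heq : q / p * (η * p / (η * p + (1 - η) * q)) =
          η * q / (η * p + (1 - η) * q) := by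
        field_simp
      rw [heq, le_div_iff₀ hD]
      nlinarith [mul_nonneg (mul_pos h0 h0).le (sub_nonneg.2 h)]
    have hmul := mul_le_mul hη_le (neg_le_neg hL) (by linarith)
      (mul_pos (div_pos hq hp) hχ0).le
    have hmax := mul_le_mul_of_nonpos_right (le_max_right (p / q) (q / p))
      (mul_neg_of_pos_of_neg hχ0 hlχ).le
    linarith
end
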